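/- Let 0 < p ≤ 1 and let Φ : M_m(ℂ) → M_n(ℂ) be a unital Schwarz map. Then for every positive definite A ∈ M_n(ℂ) and every B ∈ M_m(ℂ), tr[(Φ(B)* A^p Φ(B))^{1/p}] ≤ tr[(B* Φ†(A)^p B)^{1/p}]. -/

import Mathlib

open Matrix
open scoped ComplexOrder

/-- Real power of a matrix, defined spectrally for Hermitian matrices (junk value `0` otherwise). -/
noncomputable def mpow {k : ℕ} (A : Matrix (Fin k) (Fin k) ℂ) (p : ℝ) : Matrix (Fin k) (Fin k) ℂ :=
  if hA : A.IsHermitian then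
    (hA.eigenvectorUnitary : Matrix (Fin k) (Fin k) ℂ) *
      Matrix.diagonal (fun i => ((hA.eigenvalues i ^ p : ℝ) : ℂ)) *
      (hA.eigenvectorUnitary : Matrix (Fin k) (Fin k) ℂ)ᴴ
  else 0

/-- A Schwarz map: `Φ(K*K) ≥ Φ(K)*Φ(K)` for all `K`. -/
def IsSchwarz {a b : ℕ} (Φ : Matrix (Fin a) (Fin a) ℂ →ₗ[ℂ] Matrix (Fin b) (Fin b) ℂ) : Prop :=
  ∀ K, (Φ (Kᴴ * K) - (Φ K)ᴴ * Φ K).PosSemidef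

/-- A positive map: sends positive semidefinite matrices to positive semidefinite matrices. -/
def IsPositiveMap {a b : ℕ} (Φ : Matrix (Fin a) (Fin a) ℂ →ₗ[ℂ] Matrix (Fin b) (Fin b) ℂ) : Prop :=
  ∀ X, X.PosSemidef → (Φ X).PosSemidef

/-- `Ψ` is the Hilbert–Schmidt adjoint of `Φ`: `⟨X, Φ Y⟩ = ⟨Ψ X, Y⟩`. -/
def IsHSAdjoint {a b : ℕ} (Φ : Matrix (Fin a) (Fin a) ℂ →ₗ[ℂ] Matrix (Fin b) (Fin b) ℂ)
    (Ψ : Matrix (Fin b) (Fin b) ℂ →ₗ[ℂ] Matrix (Fin a) (Fin a) ℂ) : Prop :=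
  ∀ X Y, (Xᴴ * Φ Y).trace = ((Ψ X)ᴴ * Y).trace

/-!
Put `X = Φ(B)* A^p Φ(B)` and `C = X^(1/p)`, so that `tr X^(1/p) = tr (X C^(1-p))`. By the Schwarz
inequality for `K*` and for `K`, the forms `tr (Φ(K)* A Φ(K))` and `tr (Φ(K)* Φ(K) C)` are at most
`tr (K* Φ†(A) K)` and `tr (K* K Φ†(C))`. In eigenbases all four are squared weighted `ℓ²` norms
and Stein–Weiss interpolation gives `tr (X C^(1-p)) ≤ tr (B* Φ†(A)^p B Φ†(C)^(1-p))`. The constant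
is one because `a^p b^(1-p)` is an integral of parallel sums of `a` with multiples of `b`, and the
parallel sum is the weight of the infimal convolution of two weighted norms. Klein's form of Young's
inequality bounds the right-hand side by `p tr (B* Φ†(A)^p B)^(1/p) + (1-p) tr Φ†(C)`. Finally
`tr Φ†(C) = tr (C Φ(1)) ≤ tr C`, since the Schwarz inequality at `1` forces `Φ(1) ≤ 1`, and
`(1-p) tr C` cancels.
-/

section ParallelSum

/-- The parallel sum of two nonnegative real weights, the largest `w` with
`w * ‖y + z‖ ^ 2 ≤ a * ‖y‖ ^ 2 + b * ‖z‖ ^ 2` for all `y` and `z`. It is `0` when both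
weights vanish, as it should be, since `0 / 0 = 0`. -/
noncomputable def parallelSum (a b : ℝ) : ℝ := a * b / (a + b)

lemma parallelSum_mul_norm_add_sq_le {E : Type*} [SeminormedAddCommGroup E] {a b : ℝ} (ha : 0 ≤ a)
    (hb : 0 ≤ b) (y z : E) :
    parallelSum a b * ‖y + z‖ ^ 2 ≤ a * ‖y‖ ^ 2 + b * ‖z‖ ^ 2 := by
  rcases (add_nonneg ha hb).eq_or_lt with hab | hab
  · rw [parallelSum, ← hab, div_zero, zero_mul]
    positivity
  have htriangle : ‖y + z‖ ^ 2 ≤ (‖y‖ + ‖z‖) ^ 2 := by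
    gcongr
    exact norm_add_le y z
  rw [parallelSum, div_mul_eq_mul_div, div_le_iff₀ hab]
  calc a * b * ‖y + z‖ ^ 2 ≤ a * b * (‖y‖ + ‖z‖) ^ 2 := by gcongr
    _ ≤ (a * ‖y‖ ^ 2 + b * ‖z‖ ^ 2) * (a + b) := by
      linarith [sq_nonneg (a * ‖y‖ - b * ‖z‖)]

lemma exists_add_eq_parallelSum_mul_norm_sq {E : Type*} [SeminormedAddCommGroup E]
    [NormedSpace ℝ E] {a b : ℝ} (ha : 0 ≤ a) (hb : 0 ≤ b) (x : E) :
    ∃ y z, y + z = x ∧ a * ‖y‖ ^ 2 + b * ‖z‖ ^ 2 = parallelSum a b * ‖x‖ ^ 2 := by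
  rcases (add_nonneg ha hb).eq_or_lt with hab | hab
  · obtain ⟨rfl, rfl⟩ := (add_eq_zero_iff_of_nonneg ha hb).mp hab.symm
    exact ⟨x, 0, add_zero x, by simp [parallelSum]⟩
  refine ⟨(b / (a + b)) • x, (a / (a + b)) • x, ?_, ?_⟩
  · rw [← add_smul, ← add_div, add_comm b, div_self hab.ne', one_smul]
  · simp only [norm_smul, mul_pow, Real.norm_eq_abs, sq_abs, parallelSum]
    field_simp
    ring

variable {ι κ E F : Type*} [Fintype ι] [Fintype κ] [SeminormedAddCommGroup E] [NormedSpace ℝ E]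
  [SeminormedAddCommGroup F]

lemma sum_parallelSum_mul_norm_sq_le (T : (ι → E) →+ (κ → F)) {a b : ι → ℝ} {α β : κ → ℝ}
    (ha : 0 ≤ a) (hb : 0 ≤ b) (hα : 0 ≤ α) (hβ : 0 ≤ β)
    (hTa : ∀ x, ∑ k, α k * ‖T x k‖ ^ 2 ≤ ∑ i, a i * ‖x i‖ ^ 2)
    (hTb : ∀ x, ∑ k, β k * ‖T x k‖ ^ 2 ≤ ∑ i, b i * ‖x i‖ ^ 2) (x : ι → E) :
    ∑ k, parallelSum (α k) (β k) * ‖T x k‖ ^ 2 ≤ ∑ i, parallelSum (a i) (b i) * ‖x i‖ ^ 2 := by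
  choose y z hyz hsplit using fun i => exists_add_eq_parallelSum_mul_norm_sq (ha i) (hb i) (x i)
  obtain rfl : y + z = x := funext hyz
  calc ∑ k, parallelSum (α k) (β k) * ‖T (y + z) k‖ ^ 2
      ≤ ∑ k, (α k * ‖T y k‖ ^ 2 + β k * ‖T z k‖ ^ 2) := by
        rw [map_add]
        gcongr with k
        exact parallelSum_mul_norm_add_sq_le (hα k) (hβ k) _ _
    _ ≤ ∑ i, (a i * ‖y i‖ ^ 2 + b i * ‖z i‖ ^ 2) := by
        simp only [Finset.sum_add_distrib]
        exact add_le_add (hTa y) (hTb z)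
    _ = ∑ i, parallelSum (a i) (b i) * ‖(y + z) i‖ ^ 2 := Finset.sum_congr rfl fun i _ => hsplit i

open MeasureTheory Set

lemma mul_rpowIntegrand₀₁_div {p t a b : ℝ} (hp : p ∈ Ioo 0 1) (ht : 0 < t) (ha : 0 ≤ a)
    (hb : 0 ≤ b) :
    b * Real.rpowIntegrand₀₁ p t (a / b) = t ^ (p - 1) * t⁻¹ * parallelSum a (t * b) := by
  rw [Real.rpowIntegrand₀₁_eq_pow_div hp ht.le (by positivity), parallelSum]
  rcases hb.eq_or_lt with rfl | hb
  · simp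
  · have : a + t * b ≠ 0 := by positivity
    field_simp
    ring

lemma mul_div_rpow {p a b : ℝ} (hp : p < 1) (ha : 0 ≤ a) (hb : 0 ≤ b) :
    b * (a / b) ^ p = a ^ p * b ^ (1 - p) := by
  rcases hb.eq_or_lt with rfl | hb
  · simp [Real.zero_rpow (sub_pos.mpr hp).ne']
  · rw [Real.div_rpow ha hb.le, Real.rpow_sub hb, Real.rpow_one]
    ring

lemma exists_measure_rpow_mul_rpow_eq_integral_parallelSum {p : ℝ} (hp : p ∈ Ioo 0 1) :
    ∃ μ : Measure ℝ, ∀ a b : ℝ, 0 ≤ a → 0 ≤ b →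
      IntegrableOn (fun t => t ^ (p - 1) * t⁻¹ * parallelSum a (t * b)) (Ioi 0) μ ∧
        a ^ p * b ^ (1 - p) = ∫ t in Ioi 0, t ^ (p - 1) * t⁻¹ * parallelSum a (t * b) ∂μ := by
  obtain ⟨μ, hμ⟩ := Real.exists_measure_rpow_eq_integral_rpowIntegrand₀₁ hp
  refine ⟨μ, fun a b ha hb => ?_⟩
  obtain ⟨hint, heq⟩ := hμ (a / b) (div_nonneg ha hb)
  have hcongr : EqOn (fun t => b * Real.rpowIntegrand₀₁ p t (a / b))
      (fun t => t ^ (p - 1) * t⁻¹ * parallelSum a (t * b)) (Ioi 0) :=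
    fun t ht => mul_rpowIntegrand₀₁_div hp ht ha hb
  refine ⟨(integrableOn_congr_fun hcongr measurableSet_Ioi).mp (hint.const_mul b), ?_⟩
  rw [← mul_div_rpow hp.2 ha hb, heq, ← integral_const_mul,
    setIntegral_congr_fun measurableSet_Ioi hcongr]

theorem sum_rpow_mul_rpow_mul_norm_sq_le {p : ℝ} (hp0 : 0 ≤ p) (hp1 : p ≤ 1)
    (T : (ι → E) →+ (κ → F)) {a b : ι → ℝ} {α β : κ → ℝ}
    (ha : 0 ≤ a) (hb : 0 ≤ b) (hα : 0 ≤ α) (hβ : 0 ≤ β)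
    (hTa : ∀ x, ∑ k, α k * ‖T x k‖ ^ 2 ≤ ∑ i, a i * ‖x i‖ ^ 2)
    (hTb : ∀ x, ∑ k, β k * ‖T x k‖ ^ 2 ≤ ∑ i, b i * ‖x i‖ ^ 2) (x : ι → E) :
    ∑ k, α k ^ p * β k ^ (1 - p) * ‖T x k‖ ^ 2 ≤ ∑ i, a i ^ p * b i ^ (1 - p) * ‖x i‖ ^ 2 := by
  rcases hp0.eq_or_lt with rfl | hp0
  · simpa using hTb x
  rcases hp1.eq_or_lt with rfl | hp1
  · simpa using hTa x
  obtain ⟨μ, hμ⟩ := exists_measure_rpow_mul_rpow_eq_integral_parallelSum ⟨hp0, hp1⟩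
  have integrable {a b : ℝ} (ha : 0 ≤ a) (hb : 0 ≤ b) (w : ℝ) :=
    (hμ a b ha hb).1.mul_const w
  have integral_eq {a b : ℝ} (ha : 0 ≤ a) (hb : 0 ≤ b) (w : ℝ) :
      a ^ p * b ^ (1 - p) * w =
        ∫ t in Ioi 0, t ^ (p - 1) * t⁻¹ * parallelSum a (t * b) * w ∂μ := by
    rw [(hμ a b ha hb).2, integral_mul_const]
  simp only [integral_eq (hα _) (hβ _), integral_eq (ha _) (hb _)]
  rw [← integral_finsetSum _ fun k _ => integrable (hα k) (hβ k) _,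
    ← integral_finsetSum _ fun i _ => integrable (ha i) (hb i) _]
  refine setIntegral_mono_on (integrable_finsetSum _ fun k _ => integrable (hα k) (hβ k) _)
    (integrable_finsetSum _ fun i _ => integrable (ha i) (hb i) _) measurableSet_Ioi
    fun t (ht : 0 < t) => ?_
  simp only [mul_assoc _ (parallelSum _ _), ← Finset.mul_sum]
  gcongr
  refine sum_parallelSum_mul_norm_sq_le T ha (fun i => mul_nonneg ht.le (hb i)) hα
    (fun k => mul_nonneg ht.le (hβ k)) hTa (fun y => ?_) x
  simp only [mul_assoc, ← Finset.mul_sum]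
  gcongr
  exact hTb y

end ParallelSum

section TraceCoordinates

open scoped MatrixOrder

variable {m n 𝕜 : Type*} [Fintype m] [Fintype n] [DecidableEq m] [DecidableEq n] [RCLike 𝕜]

lemma re_trace_conjTranspose_mul_diagonal_mul_diagonal (M : Matrix m n 𝕜) (f : m → ℝ) (g : n → ℝ) :
    RCLike.re (Mᴴ * diagonal (RCLike.ofReal ∘ f : m → 𝕜) * M *
      diagonal (RCLike.ofReal ∘ g : n → 𝕜)).trace =
      ∑ i : m × n, f i.1 * g i.2 * ‖M i.1 i.2‖ ^ 2 := by
  have hentry (i : m) (j : n) : star (M i j) * f i * M i j * g j =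
      ((f i * g j * ‖M i j‖ ^ 2 : ℝ) : 𝕜) := by
    push_cast
    rw [← RCLike.conj_mul, RCLike.star_def]
    ring
  simp only [Matrix.trace, diag_apply, mul_diagonal, mul_apply (N := M), conjTranspose_apply,
    Function.comp_apply, Finset.sum_mul, hentry, ← RCLike.ofReal_sum, RCLike.ofReal_re]
  rw [Fintype.sum_prod_type, Finset.sum_comm]

/-- The entries `⟪uᵢ, D vⱼ⟫` of a matrix `D` with respect to the eigenbases `u` of `A` and `v` of
`C`, as an additive isomorphism. -/
noncomputable def eigenCoords {A : Matrix m m 𝕜} {C : Matrix n n 𝕜} (hA : A.IsHermitian)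
    (hC : C.IsHermitian) : Matrix m n 𝕜 ≃+ (m × n → 𝕜) where
  toFun D i := ((hA.eigenvectorUnitary : Matrix m m 𝕜)ᴴ * D *
    (hC.eigenvectorUnitary : Matrix n n 𝕜)) i.1 i.2
  invFun x := (hA.eigenvectorUnitary : Matrix m m 𝕜) * of (fun i j => x (i, j)) *
    (hC.eigenvectorUnitary : Matrix n n 𝕜)ᴴ
  left_inv D := by
    change (hA.eigenvectorUnitary : Matrix m m 𝕜) *
      (star (hA.eigenvectorUnitary : Matrix m m 𝕜) * D *
        (hC.eigenvectorUnitary : Matrix n n 𝕜)) *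
        star (hC.eigenvectorUnitary : Matrix n n 𝕜) = D
    simp [Matrix.mul_assoc, ← Matrix.mul_assoc _ (star _)]
  right_inv x := by
    ext i
    simp [← star_eq_conjTranspose, Matrix.mul_assoc, ← Matrix.mul_assoc (star _)]
  map_add' D D' := by
    ext i
    simp [Matrix.mul_add, Matrix.add_mul]

lemma cfc_eq_eigenvectorUnitary_mul_diagonal {A : Matrix m m 𝕜} (hA : A.IsHermitian)
    (f : ℝ → ℝ) :
    cfc f A = (hA.eigenvectorUnitary : Matrix m m 𝕜) *
      diagonal (RCLike.ofReal ∘ f ∘ hA.eigenvalues : m → 𝕜) *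
      (hA.eigenvectorUnitary : Matrix m m 𝕜)ᴴ :=
  hA.cfc_eq f

variable {A : Matrix m m 𝕜} {C : Matrix n n 𝕜}

lemma re_trace_conjTranspose_mul_cfc_mul_cfc (hA : A.IsHermitian) (hC : C.IsHermitian) (f g : ℝ → ℝ)
    (D : Matrix m n 𝕜) :
    RCLike.re (Dᴴ * cfc f A * D * cfc g C).trace =
      ∑ i : m × n, f (hA.eigenvalues i.1) * g (hC.eigenvalues i.2) *
        ‖eigenCoords hA hC D i‖ ^ 2 := by
  refine Eq.trans ?_ (re_trace_conjTranspose_mul_diagonal_mul_diagonal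
    ((hA.eigenvectorUnitary : Matrix m m 𝕜)ᴴ * D * (hC.eigenvectorUnitary : Matrix n n 𝕜))
    (f ∘ hA.eigenvalues) (g ∘ hC.eigenvalues))
  rw [cfc_eq_eigenvectorUnitary_mul_diagonal hA, cfc_eq_eigenvectorUnitary_mul_diagonal hC,
    ← Matrix.mul_assoc, ← Matrix.mul_assoc, trace_mul_comm]
  simp only [Matrix.mul_assoc, conjTranspose_mul, conjTranspose_conjTranspose]

lemma re_trace_conjTranspose_mul_mul (hA : A.IsHermitian) (hC : C.IsHermitian) (D : Matrix m n 𝕜) :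
    RCLike.re (Dᴴ * A * D).trace =
      ∑ i : m × n, hA.eigenvalues i.1 * ‖eigenCoords hA hC D i‖ ^ 2 := by
  simpa [cfc_id ℝ A hA.isSelfAdjoint, cfc_const_one ℝ C hC.isSelfAdjoint] using
    re_trace_conjTranspose_mul_cfc_mul_cfc hA hC id (fun _ => 1) D

lemma re_trace_conjTranspose_mul_self_mul (hA : A.IsHermitian) (hC : C.IsHermitian)
    (D : Matrix m n 𝕜) :
    RCLike.re (Dᴴ * D * C).trace =
      ∑ i : m × n, hC.eigenvalues i.2 * ‖eigenCoords hA hC D i‖ ^ 2 := by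
  simpa [cfc_id ℝ C hC.isSelfAdjoint, cfc_const_one ℝ A hA.isSelfAdjoint] using
    re_trace_conjTranspose_mul_cfc_mul_cfc hA hC (fun _ => 1) id D

lemma re_trace_conjTranspose_mul_rpow_mul_rpow (hA : A.PosSemidef) (hC : C.PosSemidef) (p q : ℝ)
    (D : Matrix m n 𝕜) :
    RCLike.re (Dᴴ * A ^ p * D * C ^ q).trace =
      ∑ i : m × n, hA.1.eigenvalues i.1 ^ p * hC.1.eigenvalues i.2 ^ q *
        ‖eigenCoords hA.1 hC.1 D i‖ ^ 2 := by
  rw [CFC.rpow_eq_cfc_real hA.nonneg, CFC.rpow_eq_cfc_real hC.nonneg,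
    re_trace_conjTranspose_mul_cfc_mul_cfc hA.1 hC.1]

theorem re_trace_conjTranspose_mul_rpow_mul_rpow_le {m' n' : Type*} [Fintype m'] [Fintype n']
    [DecidableEq m'] [DecidableEq n'] {A' : Matrix m' m' 𝕜} {C' : Matrix n' n' 𝕜} {p : ℝ}
    (hp0 : 0 ≤ p) (hp1 : p ≤ 1) (T : Matrix m' n' 𝕜 →+ Matrix m n 𝕜)
    (hA : A.PosSemidef) (hC : C.PosSemidef) (hA' : A'.PosSemidef) (hC' : C'.PosSemidef)
    (hleft : ∀ X, RCLike.re ((T X)ᴴ * A * T X).trace ≤ RCLike.re (Xᴴ * A' * X).trace)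
    (hright : ∀ X, RCLike.re ((T X)ᴴ * T X * C).trace ≤ RCLike.re (Xᴴ * X * C').trace)
    (X : Matrix m' n' 𝕜) :
    RCLike.re ((T X)ᴴ * A ^ p * T X * C ^ (1 - p)).trace ≤
      RCLike.re (Xᴴ * A' ^ p * X * C' ^ (1 - p)).trace := by
  let S : (m' × n' → 𝕜) →+ (m × n → 𝕜) := (eigenCoords hA.1 hC.1).toAddMonoidHom.comp
    (T.comp (eigenCoords hA'.1 hC'.1).symm.toAddMonoidHom)
  have hS (X : Matrix m' n' 𝕜) : S (eigenCoords hA'.1 hC'.1 X) = eigenCoords hA.1 hC.1 (T X) :=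
    congrArg (eigenCoords hA.1 hC.1 <| T ·) ((eigenCoords hA'.1 hC'.1).symm_apply_apply X)
  simp only [re_trace_conjTranspose_mul_mul hA.1 hC.1, re_trace_conjTranspose_mul_mul hA'.1 hC'.1,
    re_trace_conjTranspose_mul_self_mul hA.1 hC.1,
    re_trace_conjTranspose_mul_self_mul hA'.1 hC'.1, ← hS] at hleft hright
  simp only [re_trace_conjTranspose_mul_rpow_mul_rpow hA hC,
    re_trace_conjTranspose_mul_rpow_mul_rpow hA' hC', ← hS]
  exact sum_rpow_mul_rpow_mul_norm_sq_le hp0 hp1 S (fun i => hA'.eigenvalues_nonneg i.1)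
    (fun i => hC'.eigenvalues_nonneg i.2) (fun i => hA.eigenvalues_nonneg i.1)
    (fun i => hC.eigenvalues_nonneg i.2) ((eigenCoords hA'.1 hC'.1).surjective.forall.mpr hleft)
    ((eigenCoords hA'.1 hC'.1).surjective.forall.mpr hright) _

end TraceCoordinates

section TraceInequalities

open scoped MatrixOrder

variable {n 𝕜 : Type*} [Fintype n] [DecidableEq n] [RCLike 𝕜] {A C : Matrix n n 𝕜}

theorem re_trace_cfc_mul_cfc_le_add (hA : A.IsHermitian) (hC : C.IsHermitian) {f g u v : ℝ → ℝ}
    (h : ∀ x ∈ spectrum ℝ A, ∀ y ∈ spectrum ℝ C, f x * g y ≤ u x + v y) :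
    RCLike.re (cfc f A * cfc g C).trace ≤
      RCLike.re (cfc u A).trace + RCLike.re (cfc v C).trace := by
  have hfg := re_trace_conjTranspose_mul_cfc_mul_cfc hA hC f g 1
  have hu := re_trace_conjTranspose_mul_cfc_mul_cfc hA hC u (fun _ => 1) 1
  have hv := re_trace_conjTranspose_mul_cfc_mul_cfc hA hC (fun _ => 1) v 1
  simp only [conjTranspose_one, one_mul, mul_one, cfc_const_one ℝ A hA.isSelfAdjoint,
    cfc_const_one ℝ C hC.isSelfAdjoint] at hfg hu hv
  rw [hfg, hu, hv, ← Finset.sum_add_distrib]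
  simp only [← add_mul]
  gcongr with i
  exact h _ (hA.eigenvalues_mem_spectrum_real _) _ (hC.eigenvalues_mem_spectrum_real _)

theorem re_trace_mul_rpow_one_sub_le_add {p : ℝ} (hp0 : 0 < p) (hp1 : p ≤ 1) (hA : A.PosSemidef)
    (hC : C.PosSemidef) :
    RCLike.re (A * C ^ (1 - p)).trace ≤
      p * RCLike.re (A ^ (1 / p)).trace + (1 - p) * RCLike.re C.trace := by
  have hyoung : ∀ x ∈ spectrum ℝ A, ∀ y ∈ spectrum ℝ C,
      id x * y ^ (1 - p) ≤ p * x ^ (1 / p) + (1 - p) * id y := by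
    intro x hx y hy
    have hx0 : 0 ≤ x := spectrum_nonneg_of_nonneg hA.nonneg hx
    have hamgm := Real.geom_mean_le_arith_mean2_weighted hp0.le (sub_nonneg.mpr hp1)
      (Real.rpow_nonneg hx0 (1 / p)) (spectrum_nonneg_of_nonneg hC.nonneg hy)
      (add_sub_cancel p 1)
    rwa [← Real.rpow_mul hx0, one_div_mul_cancel hp0.ne', Real.rpow_one] at hamgm
  have hklein := re_trace_cfc_mul_cfc_le_add hA.1 hC.1 hyoung
  rwa [cfc_const_mul p _ A (A.finite_real_spectrum.continuousOn _),
    cfc_const_mul (1 - p) _ C (C.finite_real_spectrum.continuousOn _), cfc_id ℝ A, cfc_id ℝ C,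
    ← CFC.rpow_eq_cfc_real hA.nonneg, ← CFC.rpow_eq_cfc_real hC.nonneg, trace_smul, trace_smul,
    RCLike.smul_re, RCLike.smul_re] at hklein

lemma mul_rpow_eq_rpow_one_add {q : ℝ} (hq : 1 + q ≠ 0) (hA : A.PosSemidef) :
    A * A ^ q = A ^ (1 + q) := by
  simp only [CFC.rpow_eq_cfc_real hA.nonneg]
  nth_rewrite 1 [← cfc_id ℝ A]
  rw [← cfc_mul _ _ A continuousOn_id (A.finite_real_spectrum.continuousOn _)]
  refine cfc_congr fun x hx => ?_
  rw [Real.rpow_add' (spectrum_nonneg_of_nonneg hA.nonneg hx) hq, Real.rpow_one, id]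

lemma mul_rpow_one_div_rpow_one_sub {p : ℝ} (hp0 : 0 < p) (hp1 : p ≤ 1) (hA : A.PosSemidef) :
    A * (A ^ (1 / p)) ^ (1 - p) = A ^ (1 / p) := by
  have hexponent : 1 + 1 / p * (1 - p) = 1 / p := by
    field_simp
    ring
  rw [CFC.rpow_rpow_of_exponent_nonneg A _ _ (by positivity) (sub_nonneg.mpr hp1) hA.nonneg,
    mul_rpow_eq_rpow_one_add (by rw [hexponent]; positivity) hA, hexponent]

end TraceInequalities

section SchwarzMaps

open scoped MatrixOrder

lemma trace_mul_nonneg {n 𝕜 : Type*} [Fintype n] [RCLike 𝕜] {A P : Matrix n n 𝕜}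
    (hA : A.PosSemidef) (hP : P.PosSemidef) : 0 ≤ (A * P).trace := by
  classical
  obtain ⟨C, rfl⟩ := CStarAlgebra.nonneg_iff_eq_star_mul_self.mp hA.nonneg
  rw [star_eq_conjTranspose, Matrix.mul_assoc, trace_mul_comm]
  exact (hP.mul_mul_conjTranspose_same C).trace_nonneg

variable {m n : ℕ} {Φ : Matrix (Fin m) (Fin m) ℂ →ₗ[ℂ] Matrix (Fin n) (Fin n) ℂ}
  {Ψ : Matrix (Fin n) (Fin n) ℂ →ₗ[ℂ] Matrix (Fin m) (Fin m) ℂ}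

lemma IsPositiveMap.map_conjTranspose (hΦ : IsPositiveMap Φ) (K : Matrix (Fin m) (Fin m) ℂ) :
    Φ Kᴴ = (Φ K)ᴴ :=
  map_star (PositiveLinearMap.mk₀ Φ fun X hX =>
    (hΦ X (Matrix.nonneg_iff_posSemidef.mp hX)).nonneg) K

lemma IsSchwarz.isPositiveMap (hΦ : IsSchwarz Φ) : IsPositiveMap Φ := by
  intro X hX
  obtain ⟨K, rfl⟩ := CStarAlgebra.nonneg_iff_eq_star_mul_self.mp hX.nonneg
  simpa [star_eq_conjTranspose] using (hΦ K).add (posSemidef_conjTranspose_mul_self (Φ K))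

lemma IsSchwarz.posSemidef_one_sub_map_one (hΦ : IsSchwarz Φ) : (1 - Φ 1).PosSemidef := by
  have hself : (Φ 1)ᴴ = Φ 1 := by
    rw [← hΦ.isPositiveMap.map_conjTranspose, conjTranspose_one]
  have hschwarz : (Φ 1 - Φ 1 * Φ 1).PosSemidef := by
    simpa [hself] using hΦ 1
  have hdecomp : 1 - Φ 1 = (1 - Φ 1)ᴴ * (1 - Φ 1) + (Φ 1 - Φ 1 * Φ 1) := by
    rw [conjTranspose_sub, conjTranspose_one, hself]
    noncomm_ring
  rw [hdecomp]
  exact (posSemidef_conjTranspose_mul_self _).add hschwarz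

lemma IsHSAdjoint.trace_mul_map (hadj : IsHSAdjoint Φ Ψ) (hΦ : IsPositiveMap Φ)
    (X : Matrix (Fin n) (Fin n) ℂ) (Y : Matrix (Fin m) (Fin m) ℂ) :
    (X * Φ Y).trace = (Ψ X * Y).trace := by
  have h := congrArg star (hadj X Yᴴ)
  rwa [hΦ.map_conjTranspose, ← trace_conjTranspose, ← trace_conjTranspose, conjTranspose_mul,
    conjTranspose_mul, conjTranspose_conjTranspose, conjTranspose_conjTranspose,
    conjTranspose_conjTranspose, conjTranspose_conjTranspose, trace_mul_comm,
    trace_mul_comm Y] at h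

lemma IsHSAdjoint.map_conjTranspose (hadj : IsHSAdjoint Φ Ψ) (hΦ : IsPositiveMap Φ)
    (X : Matrix (Fin n) (Fin n) ℂ) : Ψ Xᴴ = (Ψ X)ᴴ :=
  ext_iff_trace_mul_right.mpr fun Y => by rw [← hadj.trace_mul_map hΦ, hadj]

lemma IsHSAdjoint.isPositiveMap (hadj : IsHSAdjoint Φ Ψ) (hΦ : IsPositiveMap Φ) :
    IsPositiveMap Ψ := by
  intro A hA
  refine .of_dotProduct_mulVec_nonneg ?_ fun x => ?_
  · rw [IsHermitian, ← hadj.map_conjTranspose hΦ, hA.1.eq]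
  · have h := trace_mul_nonneg hA (hΦ _ (posSemidef_vecMulVec_self_star x))
    rwa [hadj.trace_mul_map hΦ, mul_vecMulVec, trace_vecMulVec, dotProduct_comm] at h

lemma IsHSAdjoint.trace_map_le_trace (hadj : IsHSAdjoint Φ Ψ) (hΦ : IsPositiveMap Φ)
    (hone : (1 - Φ 1).PosSemidef) {A : Matrix (Fin n) (Fin n) ℂ} (hA : A.PosSemidef) :
    (Ψ A).trace ≤ A.trace := by
  have h := trace_mul_nonneg hA hone
  rwa [mul_sub, mul_one, trace_sub, sub_nonneg, hadj.trace_mul_map hΦ, mul_one] at h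

lemma IsHSAdjoint.trace_conjTranspose_mul_mul_le (hadj : IsHSAdjoint Φ Ψ) (hΦ : IsSchwarz Φ)
    {A : Matrix (Fin n) (Fin n) ℂ} (hA : A.PosSemidef) (X : Matrix (Fin m) (Fin m) ℂ) :
    ((Φ X)ᴴ * A * Φ X).trace ≤ (Xᴴ * Ψ A * X).trace := by
  have h := trace_mul_nonneg hA (hΦ Xᴴ)
  rw [mul_sub, trace_sub, hadj.trace_mul_map hΦ.isPositiveMap, sub_nonneg,
    hΦ.isPositiveMap.map_conjTranspose, conjTranspose_conjTranspose, conjTranspose_conjTranspose,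
    ← Matrix.mul_assoc, ← Matrix.mul_assoc] at h
  rwa [← trace_mul_cycle, ← trace_mul_cycle (Ψ A)]

lemma IsHSAdjoint.trace_conjTranspose_mul_self_mul_le (hadj : IsHSAdjoint Φ Ψ) (hΦ : IsSchwarz Φ)
    {A : Matrix (Fin n) (Fin n) ℂ} (hA : A.PosSemidef) (X : Matrix (Fin m) (Fin m) ℂ) :
    ((Φ X)ᴴ * Φ X * A).trace ≤ (Xᴴ * X * Ψ A).trace := by
  have h := trace_mul_nonneg hA (hΦ X)
  rwa [mul_sub, trace_sub, hadj.trace_mul_map hΦ.isPositiveMap, sub_nonneg, trace_mul_comm,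
    trace_mul_comm (Ψ A)] at h

lemma mpow_eq_rpow {k : ℕ} {A : Matrix (Fin k) (Fin k) ℂ} (hA : A.PosSemidef) (p : ℝ) :
    mpow A p = A ^ p := by
  rw [mpow, dif_pos hA.1, CFC.rpow_eq_cfc_real hA.nonneg,
    cfc_eq_eigenvectorUnitary_mul_diagonal hA.1]
  rfl

theorem stmt4_general {p : ℝ} (hp0 : 0 < p) (hp1 : p ≤ 1) (hΦ : IsSchwarz Φ)
    (hadj : IsHSAdjoint Φ Ψ) {A : Matrix (Fin n) (Fin n) ℂ} (hA : A.PosSemidef)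
    (B : Matrix (Fin m) (Fin m) ℂ) :
    (mpow ((Φ B)ᴴ * mpow A p * Φ B) (1 / p)).trace.re ≤
      (mpow (Bᴴ * mpow (Ψ A) p * B) (1 / p)).trace.re := by
  have hΨ : IsPositiveMap Ψ := hadj.isPositiveMap hΦ.isPositiveMap
  rw [mpow_eq_rpow hA, mpow_eq_rpow (hΨ A hA)]
  set X := (Φ B)ᴴ * A ^ p * Φ B
  set Y := Bᴴ * Ψ A ^ p * B
  have hX : X.PosSemidef := CFC.rpow_nonneg.posSemidef.conjTranspose_mul_mul_same (Φ B)
  have hY : Y.PosSemidef := CFC.rpow_nonneg.posSemidef.conjTranspose_mul_mul_same B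
  rw [mpow_eq_rpow hX, mpow_eq_rpow hY]
  set C := X ^ (1 / p) with hC_def
  have hC : C.PosSemidef := CFC.rpow_nonneg.posSemidef
  have key : C.trace.re ≤ p * (Y ^ (1 / p)).trace.re + (1 - p) * C.trace.re :=
    calc C.trace.re = (X * C ^ (1 - p)).trace.re := by
          rw [hC_def, mul_rpow_one_div_rpow_one_sub hp0 hp1 hX]
      _ ≤ (Y * Ψ C ^ (1 - p)).trace.re :=
          re_trace_conjTranspose_mul_rpow_mul_rpow_le hp0.le hp1 Φ.toAddMonoidHom hA hC (hΨ A hA)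
            (hΨ C hC) (fun K => (hadj.trace_conjTranspose_mul_mul_le hΦ hA K).1)
            (fun K => (hadj.trace_conjTranspose_mul_self_mul_le hΦ hC K).1) B
      _ ≤ p * (Y ^ (1 / p)).trace.re + (1 - p) * (Ψ C).trace.re :=
          re_trace_mul_rpow_one_sub_le_add hp0 hp1 hY (hΨ C hC)
      _ ≤ p * (Y ^ (1 / p)).trace.re + (1 - p) * C.trace.re := by
          have := sub_nonneg.mpr hp1
          gcongr
          exact hadj.trace_map_le_trace hΦ.isPositiveMap hΦ.posSemidef_one_sub_map_one hC
  exact le_of_mul_le_mul_left (by linarith) hp0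

end SchwarzMaps

theorem stmt4 {m n : ℕ} (p : ℝ) (hp0 : 0 < p) (hp1 : p ≤ 1)
    (Φ : Matrix (Fin m) (Fin m) ℂ →ₗ[ℂ] Matrix (Fin n) (Fin n) ℂ)
    (Ψ : Matrix (Fin n) (Fin n) ℂ →ₗ[ℂ] Matrix (Fin m) (Fin m) ℂ)
    (hΦ : IsSchwarz Φ) (hunital : Φ 1 = 1) (hadj : IsHSAdjoint Φ Ψ)
    (A : Matrix (Fin n) (Fin n) ℂ) (hA : A.PosDef)
    (B : Matrix (Fin m) (Fin m) ℂ) :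
    (mpow ((Φ B)ᴴ * mpow A p * Φ B) (1 / p)).trace.re ≤
      (mpow (Bᴴ * mpow (Ψ A) p * B) (1 / p)).trace.re :=
  stmt4_general hp0 hp1 hΦ hadj hA.posSemidef B
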